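/- Let κ = e₁ ∈ S¹ and let φ ∈ C¹(S¹; ℝ) be supported in {q ∈ S¹ : q·e₁ ≥ 0}. Then (2πi)^{-1/2} ∫_{S¹} N^{1/2} e^{i(1 − q·e₁)N} φ(q) dS(q) → φ(e₁) as N → ∞. -/

import Mathlib

open MeasureTheory Real Filter Metric
open scoped RealInnerProductSpace Topology

noncomputable section

/-!
Polar coordinates turn the integral over the circle into one over `θ ∈ (-π, π)` with phase
`1 - cos θ`, which equals `s² / 2` for `s = 2 sin (θ / 2)`. The kernel `√N exp(iNs²/2) s'` has the
primitive `F(√N s)`, where `F` is the Fresnel integral. As `N → ∞` these primitives stay bounded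
and converge to `±(2πi)^{1/2} / 2` on the two sides of `θ = 0`, so integration by parts against a
`C¹` amplitude `g` gives the limit `(2πi)^{1/2} g(0)`. The limit of `F` is found by rotating the
contour to the diagonal, where the integrand becomes a Gaussian.
-/

section Fresnel

theorem integral_triangle_eq_of_differentiable {f : ℂ → ℂ} (hf : Differentiable ℂ f)
    (v w : ℂ) (x : ℝ) :
    (∫ t in 0..x, f (t * v) * v) + ∫ t in 0..x, f (x * v + t * w) * w =
      ∫ t in 0..x, f (t * (v + w)) * (v + w) := by
  obtain ⟨W, hW⟩ := hf.isExactOn_univ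
  have hf_cont := hf.continuous
  have hline (z d : ℂ) : ∫ t in 0..x, f (z + t * d) * d = W (z + x * d) - W z := by
    have hderiv (t : ℝ) : HasDerivAt (fun t : ℝ ↦ W (z + t * d)) (f (z + t * d) * d) t := by
      have hinner : HasDerivAt (fun t : ℝ ↦ z + t * d) d t := by
        simpa using ((Complex.ofRealCLM.hasDerivAt (x := t)).mul_const d).const_add z
      exact (hW _ trivial).comp t hinner
    rw [intervalIntegral.integral_eq_sub_of_hasDerivAt (fun t _ ↦ hderiv t)
      (Continuous.intervalIntegrable (by fun_prop) _ _)]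
    simp
  have hv := hline 0 v
  have hvw := hline 0 (v + w)
  simp only [zero_add] at hv hvw
  rw [hv, hvw, hline, mul_add]
  ring

/-- The Fresnel integral `∫₀ˣ exp(it²/2) dt`, in complex form and with the normalization of the
phase that makes `exp(it²/2)` the model of a nondegenerate stationary point. -/
def fresnelIntegral (x : ℝ) : ℂ := ∫ t in 0..x, Complex.exp (Complex.I * t ^ 2 / 2)

theorem hasDerivAt_fresnelIntegral (x : ℝ) :
    HasDerivAt fresnelIntegral (Complex.exp (Complex.I * x ^ 2 / 2)) x :=
  intervalIntegral.integral_hasDerivAt_right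
    (Continuous.intervalIntegrable (by fun_prop) _ _)
    (Continuous.stronglyMeasurableAtFilter (by fun_prop) _ _)
    (Continuous.continuousAt (by fun_prop))

theorem continuous_fresnelIntegral : Continuous fresnelIntegral :=
  continuous_iff_continuousAt.2 fun x ↦ (hasDerivAt_fresnelIntegral x).continuousAt

theorem fresnelIntegral_neg (x : ℝ) : fresnelIntegral (-x) = -fresnelIntegral x := by
  have h := intervalIntegral.integral_comp_neg (a := 0) (b := x)
    fun t : ℝ ↦ Complex.exp (Complex.I * t ^ 2 / 2)
  simp only [Complex.ofReal_neg, neg_sq, neg_zero] at h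
  rw [fresnelIntegral, intervalIntegral.integral_symm, ← h, fresnelIntegral]

theorem fresnelIntegral_add_integral_vertical (x : ℝ) :
    fresnelIntegral x +
        ∫ t in 0..x, Complex.exp (Complex.I * (x + t * Complex.I) ^ 2 / 2) * Complex.I =
      (1 + Complex.I) * (∫ t in 0..x, Real.exp (-1 * t ^ 2) : ℝ) := by
  have htriangle := integral_triangle_eq_of_differentiable
    (f := fun z ↦ Complex.exp (Complex.I * z ^ 2 / 2)) (by fun_prop) 1 Complex.I x
  have hdiagonal (t : ℝ) :
      Complex.exp (Complex.I * (t * (1 + Complex.I)) ^ 2 / 2) = (Real.exp (-1 * t ^ 2) : ℝ) := by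
    push_cast
    congr 1
    linear_combination ((t : ℂ) ^ 2 + Complex.I * t ^ 2 / 2) * Complex.I_sq
  simp only [mul_one, hdiagonal, intervalIntegral.integral_mul_const,
    intervalIntegral.integral_ofReal] at htriangle
  rw [fresnelIntegral, intervalIntegral.integral_mul_const, htriangle, mul_comm]

theorem norm_exp_I_mul_add_mul_I_sq (x t : ℝ) :
    ‖Complex.exp (Complex.I * (x + t * Complex.I) ^ 2 / 2)‖ = Real.exp (-x * t) := by
  have hphase : Complex.I * (x + t * Complex.I) ^ 2 / 2 =
      ((-x * t : ℝ) : ℂ) + (((x ^ 2 - t ^ 2) / 2 : ℝ) : ℂ) * Complex.I := by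
    push_cast
    linear_combination (x * t + Complex.I * t ^ 2 / 2) * Complex.I_sq
  rw [Complex.norm_exp, hphase, Complex.add_re, Complex.re_ofReal_mul, Complex.I_re,
    Complex.ofReal_re, mul_zero, add_zero]

theorem norm_integral_vertical_le {x : ℝ} (hx : 0 < x) :
    ‖∫ t in 0..x, Complex.exp (Complex.I * (x + t * Complex.I) ^ 2 / 2) * Complex.I‖ ≤ x⁻¹ :=
  calc _ ≤ ∫ t in 0..x, Real.exp (-x * t) := by
        refine (intervalIntegral.norm_integral_le_integral_norm hx.le).trans_eq ?_
        simp only [norm_mul, norm_exp_I_mul_add_mul_I_sq, Complex.norm_I, mul_one]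
    _ = x⁻¹ * (1 - Real.exp (-x * x)) := by
        rw [intervalIntegral.integral_comp_mul_left _ (neg_ne_zero.2 hx.ne'), integral_exp,
          mul_zero, Real.exp_zero, smul_eq_mul, inv_neg]
        ring
    _ ≤ x⁻¹ := mul_le_of_le_one_right (by positivity) (by linarith [Real.exp_pos (-x * x)])

theorem tendsto_integral_exp_neg_mul_sq {b : ℝ} (hb : 0 < b) :
    Tendsto (fun x : ℝ ↦ ∫ t in 0..x, Real.exp (-b * t ^ 2)) atTop (𝓝 (√(π / b) / 2)) := by
  rw [← integral_gaussian_Ioi]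
  exact intervalIntegral_tendsto_integral_Ioi 0 (integrable_exp_neg_mul_sq hb).integrableOn
    tendsto_id

theorem two_pi_I_cpow_half :
    (2 * π * Complex.I : ℂ) ^ (1 / 2 : ℂ) = (1 + Complex.I) * (√π : ℝ) := by
  have hsqrt : ((√π : ℝ) : ℂ) ^ 2 = π := by
    rw [← Complex.ofReal_pow, Real.sq_sqrt pi_pos.le]
  have hsq : ((1 + Complex.I) * (√π : ℝ)) ^ 2 = 2 * π * Complex.I := by
    linear_combination (1 + Complex.I) ^ 2 * hsqrt + π * Complex.I_sq
  have hre : 0 < ((1 + Complex.I) * (√π : ℝ)).re := by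
    simpa using Real.sqrt_pos.2 pi_pos
  rw [← hsq, one_div, Complex.sq_cpow_two_inv hre]

theorem tendsto_fresnelIntegral_atTop :
    Tendsto fresnelIntegral atTop (𝓝 ((2 * π * Complex.I : ℂ) ^ (1 / 2 : ℂ) / 2)) := by
  have hvertical : Tendsto (fun x : ℝ ↦ ∫ t in 0..x,
      Complex.exp (Complex.I * (x + t * Complex.I) ^ 2 / 2) * Complex.I) atTop (𝓝 0) := by
    refine squeeze_zero_norm' ?_ tendsto_inv_atTop_zero
    filter_upwards [eventually_gt_atTop 0] with x hx using norm_integral_vertical_le hx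
  have hdiagonal := ((Complex.continuous_ofReal.tendsto _).comp
    (tendsto_integral_exp_neg_mul_sq one_pos)).const_mul (1 + Complex.I)
  have hlimit : (2 * π * Complex.I : ℂ) ^ (1 / 2 : ℂ) / 2 =
      (1 + Complex.I) * (√(π / 1) / 2 : ℝ) - 0 := by
    rw [two_pi_I_cpow_half, div_one]
    push_cast
    ring
  rw [hlimit]
  refine (hdiagonal.sub hvertical).congr fun x ↦ ?_
  exact sub_eq_of_eq_add (fresnelIntegral_add_integral_vertical x).symm

theorem tendsto_fresnelIntegral_atBot :
    Tendsto fresnelIntegral atBot (𝓝 (-((2 * π * Complex.I : ℂ) ^ (1 / 2 : ℂ) / 2))) :=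
  (tendsto_fresnelIntegral_atTop.neg.comp tendsto_neg_atBot_atTop).congr fun x ↦ by
    simp [fresnelIntegral_neg]

theorem exists_norm_fresnelIntegral_le : ∃ C : ℝ, ∀ x : ℝ, ‖fresnelIntegral x‖ ≤ C := by
  have hrange := continuous_fresnelIntegral.isBounded_range_iff_isBigO_atTop_atBot.2
    ⟨tendsto_fresnelIntegral_atTop.isBigO_one ℝ, tendsto_fresnelIntegral_atBot.isBigO_one ℝ⟩
  obtain ⟨C, hC⟩ := hrange.exists_norm_le
  exact ⟨C, fun x ↦ hC _ ⟨x, rfl⟩⟩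

end Fresnel

section Primitive

variable {ι 𝕜 E : Type*} {l : Filter ι} [l.IsCountablyGenerated] [RCLike 𝕜]
  [NormedAddCommGroup E] [NormedSpace ℝ E] [NormedSpace 𝕜 E] [IsScalarTower ℝ 𝕜 E]
  [CompleteSpace E] {F f : ι → ℝ → 𝕜} {u : ℝ → E} {a b c C : ℝ} {L₀ L L' : 𝕜}

/- The primitives converge boundedly to a step function, so their derivatives `f i` converge weakly
to a Dirac mass whose weight is the height of the jump. -/
theorem tendsto_integral_smul_of_tendsto_primitive (hab : a ≠ b)
    (hF : ∀ i, ∀ x ∈ Set.uIcc a b, HasDerivAt (F i) (f i x) x)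
    (hf : ∀ i, IntervalIntegrable (f i) volume a b)
    (hF_le : ∀ i, ∀ x ∈ Set.uIcc a b, ‖F i x‖ ≤ C)
    (hF_left : Tendsto (fun i ↦ F i a) l (𝓝 L₀))
    (hF_lim : ∀ x ∈ Set.uIcc a b, x ≠ a → Tendsto (fun i ↦ F i x) l (𝓝 L))
    (hu : ContDiffOn ℝ 1 u (Set.uIcc a b)) :
    Tendsto (fun i ↦ ∫ x in a..b, f i x • u x) l (𝓝 ((L - L₀) • u a)) := by
  have hunique : UniqueDiffOn ℝ (Set.uIcc a b) := uniqueDiffOn_Icc (by simpa using hab.symm)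
  let u' := derivWithin u (Set.uIcc a b)
  have hu' : IntervalIntegrable u' volume a b :=
    (hu.continuousOn_derivWithin hunique le_rfl).intervalIntegrable
  have hparts (i : ι) : ∫ x in a..b, f i x • u x =
      F i b • u b - F i a • u a - ∫ x in a..b, F i x • u' x := by
    rw [intervalIntegral.integral_smul_deriv_eq_deriv_smul_of_hasDerivWithinAt
      (fun x hx ↦ (hF i x hx).hasDerivWithinAt)
      (fun x hx ↦ (hu.differentiableOn one_ne_zero x hx).hasDerivWithinAt) (hf i) hu',
      sub_sub_cancel]
  have hint : Tendsto (fun i ↦ ∫ x in a..b, F i x • u' x) l (𝓝 (∫ x in a..b, L • u' x)) := by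
    refine intervalIntegral.tendsto_integral_filter_of_dominated_convergence
      (fun x ↦ C * ‖u' x‖) (.of_forall fun i ↦ ?_) (.of_forall fun i ↦ .of_forall fun x hx ↦ ?_)
      (hu'.norm.const_mul C) ?_
    · have hF_cont : ContinuousOn (F i) (Set.uIcc a b) :=
        fun x hx ↦ (hF i x hx).continuousAt.continuousWithinAt
      exact (hF_cont.mono Set.uIoc_subset_uIcc).aestronglyMeasurable measurableSet_uIoc
        |>.smul hu'.def'.aestronglyMeasurable
    · rw [norm_smul]
      gcongr
      exact hF_le i x (Set.uIoc_subset_uIcc hx)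
    · filter_upwards [Measure.ae_ne volume a] with x hxa hx
      exact (hF_lim x (Set.uIoc_subset_uIcc hx) hxa).smul_const _
  have hftc : ∫ x in a..b, L • u' x = L • u b - L • u a := by
    rw [intervalIntegral.integral_smul,
      intervalIntegral.integral_derivWithin_uIcc_of_contDiffOn_uIcc hu, smul_sub]
  have hlim := (((hF_lim b Set.right_mem_uIcc hab.symm).smul_const (u b)).sub
    (hF_left.smul_const (u a))).sub hint
  simp only [hparts]
  convert hlim using 2
  rw [hftc, sub_smul]
  abel

theorem tendsto_integral_smul_of_tendsto_primitive_two_sided (hc : c ∈ Set.Ioo a b)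
    (hF : ∀ i, ∀ x ∈ Set.Icc a b, HasDerivAt (F i) (f i x) x)
    (hf : ∀ i, IntervalIntegrable (f i) volume a b)
    (hF_le : ∀ i, ∀ x ∈ Set.Icc a b, ‖F i x‖ ≤ C)
    (hF_mid : Tendsto (fun i ↦ F i c) l (𝓝 L₀))
    (hF_left : ∀ x ∈ Set.Ico a c, Tendsto (fun i ↦ F i x) l (𝓝 L))
    (hF_right : ∀ x ∈ Set.Ioc c b, Tendsto (fun i ↦ F i x) l (𝓝 L'))
    (hu : ContDiffOn ℝ 1 u (Set.Icc a b)) :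
    Tendsto (fun i ↦ ∫ x in a..b, f i x • u x) l (𝓝 ((L' - L) • u c)) := by
  have hleft : Set.uIcc c a ⊆ Set.Icc a b := by
    rw [Set.uIcc_of_ge hc.1.le]; exact Set.Icc_subset_Icc_right hc.2.le
  have hright : Set.uIcc c b ⊆ Set.Icc a b := by
    rw [Set.uIcc_of_le hc.2.le]; exact Set.Icc_subset_Icc_left hc.1.le
  have hab : Set.uIcc a b = Set.Icc a b := Set.uIcc_of_le (hc.1.trans hc.2).le
  have hf_left (i : ι) : IntervalIntegrable (f i) volume c a := (hf i).mono_set (hab ▸ hleft)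
  have hf_right (i : ι) : IntervalIntegrable (f i) volume c b := (hf i).mono_set (hab ▸ hright)
  have hlim_left := tendsto_integral_smul_of_tendsto_primitive hc.1.ne'
    (fun i x hx ↦ hF i x (hleft hx)) hf_left (fun i x hx ↦ hF_le i x (hleft hx)) hF_mid
    (fun x hx hxc ↦ hF_left x ⟨(hleft hx).1, lt_of_le_of_ne
      (Set.uIcc_of_ge hc.1.le ▸ hx).2 hxc⟩) (hu.mono hleft)
  have hlim_right := tendsto_integral_smul_of_tendsto_primitive hc.2.ne
    (fun i x hx ↦ hF i x (hright hx)) hf_right (fun i x hx ↦ hF_le i x (hright hx)) hF_mid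
    (fun x hx hxc ↦ hF_right x ⟨lt_of_le_of_ne (Set.uIcc_of_le hc.2.le ▸ hx).1 hxc.symm,
      (hright hx).2⟩) (hu.mono hright)
  convert hlim_right.sub hlim_left using 2 with i
  · exact (intervalIntegral.integral_interval_sub_left
      ((hf_right i).smul_continuousOn (hu.continuousOn.mono hright))
      ((hf_left i).smul_continuousOn (hu.continuousOn.mono hleft))).symm
  · module

end Primitive

section StationaryPhase

variable {E : Type*} [NormedAddCommGroup E] [NormedSpace ℂ E] [CompleteSpace E]

theorem tendsto_sqrt_integral_exp_sq_smul {s : ℝ → ℝ} {g : ℝ → E} {a b c : ℝ}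
    (hs : ContDiff ℝ 2 s) (hs' : ∀ x ∈ Set.Icc a b, 0 < deriv s x) (hc : c ∈ Set.Ioo a b)
    (hsc : s c = 0) (hg : ContDiffOn ℝ 1 g (Set.Icc a b)) :
    Tendsto (fun N : ℝ ↦ ∫ x in a..b,
        ((√N : ℂ) * Complex.exp (Complex.I * (√N * s x : ℝ) ^ 2 / 2)) • g x) atTop
      (𝓝 ((2 * π * Complex.I : ℂ) ^ (1 / 2 : ℂ) • (deriv s c)⁻¹ • g c)) := by
  have hs'_contDiff : ContDiff ℝ 1 (deriv s) := hs.deriv'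
  have hs'_cont := hs'_contDiff.continuous
  have hs_cont := hs.continuous
  have hmono : StrictMonoOn s (Set.Icc a b) :=
    strictMonoOn_of_deriv_pos (convex_Icc a b) hs_cont.continuousOn fun x hx ↦
      hs' x (interior_subset hx)
  have hcIcc := Set.Ioo_subset_Icc_self hc
  have hderiv (N x : ℝ) : HasDerivAt (fun x ↦ fresnelIntegral (√N * s x))
      (Complex.exp (Complex.I * (√N * s x : ℝ) ^ 2 / 2) * (√N * deriv s x : ℝ)) x := by
    have hinner := ((hs.differentiable two_ne_zero x).hasDerivAt.const_mul √N)
    have := (hasDerivAt_fresnelIntegral (√N * s x)).scomp x hinner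
    rwa [Complex.real_smul, mul_comm] at this
  obtain ⟨C, hC⟩ := exists_norm_fresnelIntegral_le
  have hlim := tendsto_integral_smul_of_tendsto_primitive_two_sided (l := atTop)
    (u := fun x ↦ (deriv s x)⁻¹ • g x) hc (fun N x _ ↦ hderiv N x)
    (fun N ↦ Continuous.intervalIntegrable (by fun_prop) a b) (fun N x _ ↦ hC _)
    (by simpa only [hsc, mul_zero] using tendsto_const_nhds)
    (fun x hx ↦ tendsto_fresnelIntegral_atBot.comp <|
      Real.tendsto_sqrt_atTop.atTop_mul_const_of_neg <|
        hsc ▸ hmono ⟨hx.1, (hx.2.trans hc.2).le⟩ hcIcc hx.2)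
    (fun x hx ↦ tendsto_fresnelIntegral_atTop.comp <|
      Real.tendsto_sqrt_atTop.atTop_mul_const <|
        hsc ▸ hmono hcIcc ⟨(hc.1.trans hx.1).le, hx.2⟩ hx.1)
    ((hs'_contDiff.contDiffOn.inv fun x hx ↦ (hs' x hx).ne').smul hg)
  rw [sub_neg_eq_add, add_halves] at hlim
  refine hlim.congr fun N ↦ intervalIntegral.integral_congr fun x hx ↦ ?_
  rw [Set.uIcc_of_le (hc.1.trans hc.2).le] at hx
  have hs'x : ((deriv s x : ℝ) : ℂ) ≠ 0 := by exact_mod_cast (hs' x hx).ne'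
  simp only [← Complex.coe_smul, smul_smul]
  congr 1
  push_cast
  field_simp

theorem tendsto_sqrt_integral_exp_one_sub_cos_smul {g : ℝ → E} {β : ℝ} (hβ : β ∈ Set.Ioo 0 π)
    (hg : ContDiffOn ℝ 1 g (Set.Icc (-β) β)) :
    Tendsto (fun N : ℝ ↦ ∫ θ in -β..β,
        ((√N : ℂ) * Complex.exp (Complex.I * (1 - cos θ : ℝ) * N)) • g θ) atTop
      (𝓝 ((2 * π * Complex.I : ℂ) ^ (1 / 2 : ℂ) • g 0)) := by
  let s : ℝ → ℝ := fun θ ↦ 2 * sin (θ / 2)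
  have hs' (θ : ℝ) : deriv s θ = cos (θ / 2) := by
    refine (((hasDerivAt_id' θ).div_const 2).sin.const_mul 2).deriv.trans ?_
    ring
  have hs'_pos : ∀ θ ∈ Set.Icc (-β) β, 0 < deriv s θ := fun θ hθ ↦ by
    rw [hs']
    exact cos_pos_of_mem_Ioo ⟨by linarith [hθ.1, hβ.2], by linarith [hθ.2, hβ.2]⟩
  have hs_sq (θ : ℝ) : s θ ^ 2 = 2 * (1 - cos θ) := by
    rw [mul_pow, sin_sq_eq_half_sub, mul_div_cancel₀ θ two_ne_zero]
    ring
  have hlim := tendsto_sqrt_integral_exp_sq_smul (s := s) (c := 0) (by fun_prop) hs'_pos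
    ⟨by linarith [hβ.1], hβ.1⟩ (by simp [s]) hg
  rw [hs', zero_div, cos_zero, inv_one, one_smul] at hlim
  refine hlim.congr' ?_
  filter_upwards [eventually_ge_atTop 0] with N hN
  have hphase (θ : ℝ) : Complex.I * (√N * s θ : ℝ) ^ 2 / 2 = Complex.I * (1 - cos θ : ℝ) * N := by
    rw [← Complex.ofReal_pow, mul_pow, sq_sqrt hN, hs_sq]
    push_cast
    ring
  simp only [hphase]

theorem exists_forall_abs_mem_Icc_of_eventually_nhds {p : ℝ → Prop} {r : ℝ} (hr : 0 < r)
    (hpos : ∀ᶠ x in 𝓝 r, p x) (hneg : ∀ᶠ x in 𝓝 (-r), p x) :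
    ∃ β ∈ Set.Ioo 0 r, ∀ x, |x| ∈ Set.Icc β r → p x := by
  have hboth : ∀ᶠ x in 𝓝[≤] r, p x ∧ p (-x) :=
    nhdsWithin_le_nhds (hpos.and (continuous_neg.continuousAt.eventually hneg))
  obtain ⟨m, hm, hmr⟩ := (mem_nhdsLE_iff_exists_mem_Ico_Ioc_subset hr).1 hboth
  obtain ⟨β, hmβ, hβr⟩ := exists_between hm.2
  refine ⟨β, ⟨hm.1.trans_lt hmβ, hβr⟩, fun x hx ↦ ?_⟩
  obtain ⟨hp, hp'⟩ := hmr ⟨hmβ.trans_le hx.1, hx.2⟩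
  rcases abs_choice x with habs | habs
  · rwa [habs] at hp
  · rwa [habs, neg_neg] at hp'

theorem tendsto_sqrt_integral_exp_one_sub_cos_smul_of_eventually_eq_zero {g : ℝ → E}
    (hg : ContDiff ℝ 1 g) (hpos : ∀ᶠ θ in 𝓝 π, g θ = 0) (hneg : ∀ᶠ θ in 𝓝 (-π), g θ = 0) :
    Tendsto (fun N : ℝ ↦ ∫ θ in -π..π,
        ((√N : ℂ) * Complex.exp (Complex.I * (1 - cos θ : ℝ) * N)) • g θ) atTop
      (𝓝 ((2 * π * Complex.I : ℂ) ^ (1 / 2 : ℂ) • g 0)) := by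
  obtain ⟨β, hβ, hzero⟩ := exists_forall_abs_mem_Icc_of_eventually_nhds pi_pos hpos hneg
  refine (tendsto_sqrt_integral_exp_one_sub_cos_smul hβ hg.contDiffOn).congr fun N ↦ ?_
  rw [intervalIntegral.integral_of_le (by linarith [hβ.1]),
    intervalIntegral.integral_of_le (by linarith [pi_pos])]
  refine (setIntegral_eq_of_subset_of_forall_sdiff_eq_zero measurableSet_Ioc
    (Set.Ioc_subset_Ioc (neg_le_neg hβ.2.le) hβ.2.le) fun θ hθ ↦ ?_).symm
  have hβθ : β ≤ |θ| := by
    by_contra! hlt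
    exact hθ.2 ⟨(abs_lt.1 hlt).1, (abs_lt.1 hlt).2.le⟩
  rw [hzero θ ⟨hβθ, abs_le.2 ⟨hθ.1.1.le, hθ.1.2⟩⟩, smul_zero]

end StationaryPhase

theorem exists_linearIsometryEquiv_complex_map_one_eq {V : Type*} [NormedAddCommGroup V]
    [InnerProductSpace ℝ V] (hV : Module.finrank ℝ V = 2) (e : sphere (0 : V) 1) :
    ∃ T : ℂ ≃ₗᵢ[ℝ] V, T 1 = e := by
  have := Module.finite_of_finrank_eq_succ hV
  have horth : Orthonormal ℝ (Set.domRestrict ({0} : Set (Fin 2)) fun _ ↦ (e : V)) :=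
    ⟨fun _ ↦ norm_eq_of_mem_sphere e, fun i j hij ↦ (hij (Subsingleton.elim i j)).elim⟩
  obtain ⟨b, hb⟩ := horth.exists_orthonormalBasis_extension_of_card_eq (by simpa using hV)
  exact ⟨Complex.isometryOfOrthonormal b, by
    simp [Complex.isometryOfOrthonormal_apply, hb 0 rfl]⟩

section Circle

variable {V E : Type*} [NormedAddCommGroup V] [MeasurableSpace V] [BorelSpace V]
  [NormedAddCommGroup E] [NormedSpace ℝ E]

theorem integral_toSphere_eq_finrank_smul_setIntegral_ball [NormedSpace ℝ V]
    [FiniteDimensional ℝ V] [Nontrivial V] (μ : Measure V) [μ.IsAddHaarMeasure] (f : V → E) :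
    ∫ q : sphere (0 : V) 1, f q ∂μ.toSphere =
      (Module.finrank ℝ V : ℝ) • ∫ x in ball (0 : V) 1, f (‖x‖⁻¹ • x) ∂μ := by
  set n := Module.finrank ℝ V
  let ρ : Measure (Set.Ioi (0 : ℝ)) := .volumeIoiPow (n - 1)
  let I₁ : Set (Set.Ioi (0 : ℝ)) := Set.Iio ⟨1, Set.mem_Ioi.2 one_pos⟩
  have hρ : (n : ℝ) * ρ.real I₁ = 1 := by
    have hn0 : (n : ℝ) ≠ 0 := by exact_mod_cast Module.finrank_pos.ne'
    have hcast : ((n - 1 : ℕ) : ℝ) + 1 = n := by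
      exact_mod_cast Nat.sub_add_cancel (Module.finrank_pos (R := ℝ) (M := V))
    rw [Measure.real, Measure.volumeIoiPow_apply_Iio, ENNReal.toReal_ofReal (by positivity),
      one_pow, hcast, mul_one_div_cancel hn0]
  suffices hball : ∫ x in ball (0 : V) 1, f (‖x‖⁻¹ • x) ∂μ =
      ρ.real I₁ • ∫ q : sphere (0 : V) 1, f q ∂μ.toSphere by
    rw [hball, smul_smul, hρ, one_smul]
  calc ∫ x in ball (0 : V) 1, f (‖x‖⁻¹ • x) ∂μ
      = ∫ x : ({0}ᶜ : Set V), (ball (0 : V) 1).indicator (fun x ↦ f (‖x‖⁻¹ • x)) x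
          ∂μ.comap (↑) := by
        rw [integral_subtype_comap (measurableSet_singleton _).compl, restrict_compl_singleton,
          integral_indicator measurableSet_ball]
    _ = ∫ p : sphere (0 : V) 1 × Set.Ioi (0 : ℝ),
          ((Set.univ : Set (sphere (0 : V) 1)) ×ˢ I₁).indicator (fun p ↦ f (p.1 : V)) p
            ∂μ.toSphere.prod ρ := by
        rw [← μ.measurePreserving_homeomorphUnitSphereProd.integral_comp
          (Homeomorph.measurableEmbedding _)]
        simp [Set.indicator, I₁, ← Subtype.coe_lt_coe]
    _ = ρ.real I₁ • ∫ q : sphere (0 : V) 1, f q ∂μ.toSphere := by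
        rw [integral_indicator (MeasurableSet.univ.prod measurableSet_Iio), ← Measure.prod_restrict,
          integral_fun_fst (fun q : sphere (0 : V) 1 ↦ f q), measureReal_restrict_apply_univ,
          Measure.restrict_univ]

theorem setIntegral_ball_eq_integral_exp_mul_I (f : ℂ → E) :
    ∫ z in ball (0 : ℂ) 1, f (‖z‖⁻¹ • z) =
      (1 / 2 : ℝ) • ∫ θ in -π..π, f (Complex.exp (θ * Complex.I)) := by
  have hradial : ∫ r in Set.Ioi (0 : ℝ), (Set.Iio 1).indicator (fun r ↦ r) r = 1 / 2 := by
    rw [setIntegral_indicator measurableSet_Iio, Set.Ioi_inter_Iio,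
      ← integral_Ioc_eq_integral_Ioo, ← intervalIntegral.integral_of_le zero_le_one, integral_id]
    norm_num
  rw [← integral_indicator measurableSet_ball, ← Complex.integral_comp_polarCoord_symm,
    polarCoord_target, ← hradial, intervalIntegral.integral_of_le (by linarith [pi_pos]),
    integral_Ioc_eq_integral_Ioo, ← integral_prod_smul, Measure.prod_restrict,
    Measure.volume_eq_prod]
  refine setIntegral_congr_fun (measurableSet_Ioi.prod measurableSet_Ioo) ?_
  rintro ⟨r, θ⟩ ⟨hr : 0 < r, -⟩
  have hpolar : Complex.polarCoord.symm (r, θ) = r • Complex.exp (θ * Complex.I) := by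
    simp [Complex.exp_mul_I, mul_add]
  have hnorm : ‖r • Complex.exp (θ * Complex.I)‖ = r := by
    simp [abs_of_pos hr]
  beta_reduce
  by_cases hr1 : r < 1
  · rw [hpolar, Set.indicator_of_mem (by rwa [mem_ball_zero_iff, hnorm]), hnorm,
      inv_smul_smul₀ hr.ne', Set.indicator_of_mem (Set.mem_Iio.2 hr1)]
  · rw [hpolar, Set.indicator_of_notMem (by rwa [mem_ball_zero_iff, hnorm]),
      Set.indicator_of_notMem (by exact hr1), smul_zero, zero_smul]

theorem integral_toSphere_eq_integral_exp_mul_I [InnerProductSpace ℝ V] [FiniteDimensional ℝ V]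
    (T : ℂ ≃ₗᵢ[ℝ] V) (f : V → E) :
    ∫ q : sphere (0 : V) 1, f q ∂(volume : Measure V).toSphere =
      ∫ θ in -π..π, f (T (Complex.exp (θ * Complex.I))) := by
  have : Nontrivial V := T.toEquiv.symm.nontrivial
  have hfinrank : Module.finrank ℝ V = 2 := by
    rw [← T.toLinearEquiv.finrank_eq, Complex.finrank_real_complex]
  have hball : T ⁻¹' ball 0 1 = ball 0 1 := by simp
  have hcomp : ∫ x in ball (0 : V) 1, f (‖x‖⁻¹ • x) =
      ∫ z in ball (0 : ℂ) 1, f (T (‖z‖⁻¹ • z)) := by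
    rw [← T.measurePreserving.setIntegral_preimage_emb
      T.toMeasurableEquiv.measurableEmbedding, hball]
    simp only [T.norm_map, map_smul]
  rw [integral_toSphere_eq_finrank_smul_setIntegral_ball, hcomp,
    setIntegral_ball_eq_integral_exp_mul_I (fun z ↦ f (T z)), hfinrank, smul_smul]
  norm_num

end Circle

section Sphere

variable {V : Type*} [NormedAddCommGroup V] [InnerProductSpace ℝ V]

theorem eventually_nhds_neg_inner_lt_zero (e : sphere (0 : V) 1) :
    ∀ᶠ q : sphere (0 : V) 1 in 𝓝 (-e), ⟪(q : V), (e : V)⟫ < 0 := by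
  have hcont : Continuous fun q : sphere (0 : V) 1 ↦ ⟪(q : V), (e : V)⟫ := by fun_prop
  exact hcont.continuousAt.eventually_lt_const (by simp)

theorem eventually_nhds_comp_exp_mul_I_eq_zero {E : Type*} [Zero E] {T : ℂ ≃ₗᵢ[ℝ] V}
    {e : sphere (0 : V) 1} (hT : T 1 = e) {Φ : V → E}
    (hΦ : ∀ᶠ q : sphere (0 : V) 1 in 𝓝 (-e), Φ q = 0) {α : ℝ}
    (hα : Complex.exp (α * Complex.I) = -1) :
    ∀ᶠ θ : ℝ in 𝓝 α, Φ (T (Complex.exp (θ * Complex.I))) = 0 := by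
  let P : ℝ → sphere (0 : V) 1 := fun θ ↦ ⟨T (Complex.exp (θ * Complex.I)), by simp⟩
  have hP : Continuous P := by fun_prop
  have hPα : P α = -e := Subtype.ext (by simp [P, hα, hT])
  exact hP.continuousAt.eventually (hPα ▸ hΦ)

theorem stationary_phase_sphere_d2_general [FiniteDimensional ℝ V] [MeasurableSpace V]
    [BorelSpace V] {E : Type*} [NormedAddCommGroup E] [NormedSpace ℂ E] [CompleteSpace E]
    (hV : Module.finrank ℝ V = 2) (e : sphere (0 : V) 1) (φ : sphere (0 : V) 1 → E)
    (hφC1 : ∃ Φ : V → E, ContDiff ℝ 1 Φ ∧ ∀ q : sphere (0 : V) 1, Φ q = φ q)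
    (hφsupp : ∀ᶠ q in 𝓝 (-e), φ q = 0) :
    Tendsto (fun N : ℝ ↦ (2 * (π : ℂ) * Complex.I) ^ (-(1 : ℂ) / 2) •
        ∫ q : sphere (0 : V) 1, (((N ^ ((1 : ℝ) / 2) : ℝ) : ℂ) *
          Complex.exp (Complex.I * ((1 - ⟪(q : V), (e : V)⟫ : ℝ) : ℂ) * (N : ℂ))) • φ q
            ∂(volume : Measure V).toSphere)
      atTop (𝓝 (φ e)) := by
  obtain ⟨Φ, hΦ, hΦφ⟩ := hφC1
  obtain ⟨T, hT⟩ := exists_linearIsometryEquiv_complex_map_one_eq hV e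
  simp only [← hΦφ] at hφsupp ⊢
  have hg : ContDiff ℝ 1 fun θ : ℝ ↦ Φ (T (Complex.exp (θ * Complex.I))) :=
    hΦ.comp (T.contDiff.comp (Complex.ofRealCLM.contDiff.mul contDiff_const).cexp)
  have hlim := tendsto_sqrt_integral_exp_one_sub_cos_smul_of_eventually_eq_zero hg
    (eventually_nhds_comp_exp_mul_I_eq_zero hT hφsupp Complex.exp_pi_mul_I)
    (eventually_nhds_comp_exp_mul_I_eq_zero hT hφsupp (by simp [Complex.exp_neg]))
  have hinner (θ : ℝ) : ⟪T (Complex.exp (θ * Complex.I)), (e : V)⟫ = cos θ := by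
    rw [← hT, T.inner_map_map, Complex.inner]
    simp [Complex.exp_ofReal_mul_I_re]
  have hconst : (2 * (π : ℂ) * Complex.I) ^ (-(1 : ℂ) / 2) *
      (2 * (π : ℂ) * Complex.I) ^ (1 / 2 : ℂ) = 1 := by
    rw [← Complex.cpow_add _ _ (by simp [pi_ne_zero])]
    norm_num
  convert hlim.const_smul ((2 * (π : ℂ) * Complex.I) ^ (-(1 : ℂ) / 2)) using 2 with N
  · rw [integral_toSphere_eq_integral_exp_mul_I T fun x ↦ (((N ^ ((1 : ℝ) / 2) : ℝ) : ℂ) *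
      Complex.exp (Complex.I * ((1 - ⟪x, (e : V)⟫ : ℝ) : ℂ) * (N : ℂ))) • Φ x]
    simp only [hinner, sqrt_eq_rpow]
  · rw [smul_smul, hconst, one_smul, Complex.ofReal_zero, zero_mul, Complex.exp_zero, hT]

end Sphere

/-- stationary phase on `S¹ ⊂ ℝ²` at `κ = e₁`: for `φ ∈ C¹(S¹;ℝ)` supported
in `{q : q·e₁ ≥ 0}`, `(2πi)^{-1/2} ∫_{S¹} N^{1/2} e^{i(1-q·e₁)N} φ(q) dS(q) → φ(e₁)`. -/
theorem stationary_phase_sphere_d2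
    (e₁ : sphere (0 : EuclideanSpace ℝ (Fin 2)) 1)
    (he₁ : (e₁ : EuclideanSpace ℝ (Fin 2)) = EuclideanSpace.single (0 : Fin 2) (1 : ℝ))
    (φ : sphere (0 : EuclideanSpace ℝ (Fin 2)) 1 → ℝ)
    (hφC1 : ∃ Φ : EuclideanSpace ℝ (Fin 2) → ℝ, ContDiff ℝ 1 Φ ∧
      ∀ q : sphere (0 : EuclideanSpace ℝ (Fin 2)) 1, Φ (q : EuclideanSpace ℝ (Fin 2)) = φ q)
    (hφsupp : ∀ q : sphere (0 : EuclideanSpace ℝ (Fin 2)) 1,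
      ⟪(q : EuclideanSpace ℝ (Fin 2)), (e₁ : EuclideanSpace ℝ (Fin 2))⟫ < 0 → φ q = 0) :
    Filter.Tendsto (fun N : ℝ =>
        (2 * (π : ℂ) * Complex.I) ^ (-(1 : ℂ) / 2) *
          ∫ q : sphere (0 : EuclideanSpace ℝ (Fin 2)) 1,
            ((N ^ ((1 : ℝ) / 2) : ℝ) : ℂ) *
              Complex.exp (Complex.I *
                ((1 - ⟪(q : EuclideanSpace ℝ (Fin 2)), (e₁ : EuclideanSpace ℝ (Fin 2))⟫ : ℝ) : ℂ) *
                (N : ℂ)) *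
              ((φ q : ℝ) : ℂ)
            ∂(Measure.toSphere (volume : Measure (EuclideanSpace ℝ (Fin 2)))))
      Filter.atTop (𝓝 ((φ e₁ : ℝ) : ℂ)) := by
  obtain ⟨Φ, hΦ, hΦφ⟩ := hφC1
  have hφzero := (eventually_nhds_neg_inner_lt_zero e₁).mono fun q hq ↦
    Complex.ofReal_eq_zero.2 (hφsupp q hq)
  simpa only [smul_eq_mul] using stationary_phase_sphere_d2_general finrank_euclideanSpace_fin
    e₁ (fun q ↦ (φ q : ℂ)) ⟨fun x ↦ Φ x, Complex.ofRealCLM.contDiff.comp hΦ,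
      fun q ↦ congrArg Complex.ofReal (hΦφ q)⟩ hφzero

end
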